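/- arXiv:1504.02653 — 6 statements merged into one kernel-verified Lean document; each statement's English description precedes it below -/
import Mathlib

section
/- Let W be a complex vector space, let V_ℝ ⊆ W be a real subspace (an ℝ-submodule of W viewed as a real vector space), and let f : ℂ ⊗[ℝ] V_ℝ → W be the ℂ-linear map induced by the inclusion (z ⊗ v ↦ z • v). Set V_ℂ := {v ∈ V_ℝ | i • v ∈ V_ℝ}. Then the kernel of f equals the set {i ⊗ v − 1 ⊗ (i • v) | v ∈ V_ℂ}. -/
open TensorProduct

theorem exists_eq_tmul_add_tmul_of_span_pair_eq_top {R M N : Type*} [CommSemiring R]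
    [AddCommMonoid M] [Module R M] [AddCommMonoid N] [Module R N] {p q : M}
    (hpq : Submodule.span R {p, q} = ⊤) (x : M ⊗[R] N) :
    ∃ a b : N, x = p ⊗ₜ[R] a + q ⊗ₜ[R] b := by
  induction x using TensorProduct.induction_on with
  | zero => exact ⟨0, 0, by simp⟩
  | tmul m n =>
    obtain ⟨r, s, rfl⟩ : ∃ r s : R, r • p + s • q = m :=
      Submodule.mem_span_pair.mp (hpq ▸ Submodule.mem_top)
    exact ⟨r • n, s • n, by rw [add_tmul, smul_tmul, smul_tmul]⟩
  | add x y hx hy =>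
    obtain ⟨a, b, rfl⟩ := hx
    obtain ⟨c, d, rfl⟩ := hy
    exact ⟨a + c, b + d, by rw [tmul_add, tmul_add, add_add_add_comm]⟩

theorem stmt_0_general {R A M W : Type*} [CommRing R] [CommRing A] [Algebra R A]
    [AddCommGroup M] [Module R M] [AddCommGroup W] [Module R W] [Module A W]
    [IsScalarTower R A W] {θ : A} (hθ : Submodule.span R {1, θ} = ⊤) (g : M →ₗ[R] W) :
    (LinearMap.ker (g.liftBaseChange A) : Set (A ⊗[R] M)) =
      {x | ∃ v w : M, θ • g v = g w ∧ x = θ ⊗ₜ[R] v - (1 : A) ⊗ₜ[R] w} := by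
  ext x
  constructor
  · intro hx
    obtain ⟨a, b, rfl⟩ := exists_eq_tmul_add_tmul_of_span_pair_eq_top hθ x
    have hab : g a + θ • g b = 0 := by simpa using hx
    refine ⟨b, -a, ?_, ?_⟩
    · rw [map_neg, eq_neg_of_add_eq_zero_right hab]
    · rw [tmul_neg, sub_neg_eq_add, add_comm]
  · rintro ⟨v, w, hvw, rfl⟩
    simp [hvw]

/-- Let `W` be a complex vector space, `V_ℝ ⊆ W` a real subspace, and
`f : ℂ ⊗[ℝ] V_ℝ →ₗ[ℂ] W` the ℂ-linear map induced by the inclusion (`z ⊗ v ↦ z • v`).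
With `V_ℂ := {v ∈ V_ℝ | i • v ∈ V_ℝ}`, the kernel of `f` equals
`{i ⊗ v − 1 ⊗ (i • v) | v ∈ V_ℂ}`. -/
theorem stmt_0 (W : Type*) [AddCommGroup W] [Module ℝ W] [Module ℂ W]
    [IsScalarTower ℝ ℂ W] (Vr : Submodule ℝ W) :
    (LinearMap.ker (LinearMap.liftBaseChange ℂ Vr.subtype) : Set (ℂ ⊗[ℝ] ↥Vr)) =
      {x : ℂ ⊗[ℝ] ↥Vr | ∃ (v : ↥Vr) (hv : Complex.I • (v : W) ∈ Vr),
        x = Complex.I ⊗ₜ[ℝ] v - (1 : ℂ) ⊗ₜ[ℝ] (⟨Complex.I • (v : W), hv⟩ : ↥Vr)} := by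
  rw [stmt_0_general (θ := Complex.I) (RCLike.span_one_I ℂ)]
  simp only [Submodule.subtype_apply, Subtype.exists, exists_and_left, exists_eq_left']
end

section
/- Let W be a complex vector space, let V_ℝ ⊆ W be a real subspace, let f : ℂ ⊗[ℝ] V_ℝ → W be the ℂ-linear map induced by the inclusion (z ⊗ v ↦ z • v), and set V_ℂ := {v ∈ V_ℝ | i • v ∈ V_ℝ}. Then the map φ : V_ℂ → ker f given by φ(v) = i ⊗ v − 1 ⊗ (i • v) is an ℝ-linear bijection onto the kernel of f which is conjugate-linear with respect to the complex structures, i.e. φ(i • v) = −i • φ(v) for all v ∈ V_ℂ. In particular ker f is isomorphic to the complex conjugate space of V_ℂ. -/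
open TensorProduct

/-!
Every element of `ℂ ⊗[ℝ] V_ℝ` is `1 ⊗ a + i ⊗ b` for unique `a, b ∈ V_ℝ`. Since `f` sends it to
`a + i • b`, it lies in the kernel exactly when `i • b = -a`; then `b ∈ V_ℂ`, and the element is
`φ b`. Hence taking the imaginary part `b` inverts `φ`.
-/

section Complexification

variable {V : Type*} [AddCommGroup V] [Module ℝ V]

/-- The real part `a` of an element `1 ⊗ a + i ⊗ b` of the complexification of `V`. -/
noncomputable def complexificationRe : ℂ ⊗[ℝ] V →ₗ[ℝ] V :=
  (TensorProduct.lid ℝ V).toLinearMap ∘ₗ Complex.reLm.rTensor V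

/-- The imaginary part `b` of an element `1 ⊗ a + i ⊗ b` of the complexification of `V`. -/
noncomputable def complexificationIm : ℂ ⊗[ℝ] V →ₗ[ℝ] V :=
  (TensorProduct.lid ℝ V).toLinearMap ∘ₗ Complex.imLm.rTensor V

@[simp]
theorem complexificationRe_tmul (z : ℂ) (v : V) : complexificationRe (z ⊗ₜ[ℝ] v) = z.re • v :=
  rfl

@[simp]
theorem complexificationIm_tmul (z : ℂ) (v : V) : complexificationIm (z ⊗ₜ[ℝ] v) = z.im • v :=
  rfl

theorem one_tmul_re_add_I_tmul_im (x : ℂ ⊗[ℝ] V) :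
    (1 : ℂ) ⊗ₜ[ℝ] complexificationRe x + Complex.I ⊗ₜ[ℝ] complexificationIm x = x := by
  induction x with
  | zero => simp only [map_zero, tmul_zero, add_zero]
  | tmul z v =>
    have re_add_im : z.re • (1 : ℂ) + z.im • Complex.I = z := by
      simp only [Complex.real_smul, mul_one, Complex.re_add_im]
    rw [complexificationRe_tmul, complexificationIm_tmul, ← smul_tmul, ← smul_tmul, ← add_tmul,
      re_add_im]
  | add x y hx hy =>
    rw [map_add, map_add, tmul_add, tmul_add, add_add_add_comm, hx, hy]

end Complexification

section ComplexSpace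

variable {W : Type*} [AddCommGroup W] [Module ℝ W] [Module ℂ W] [IsScalarTower ℝ ℂ W]

theorem complex_smul_eq_re_smul_add_im_smul_I_smul (z : ℂ) (w : W) :
    z • w = z.re • w + z.im • Complex.I • w := by
  rw [← smul_one_smul ℂ z.re w, ← smul_assoc z.im, ← add_smul]
  simp only [Complex.real_smul, mul_one, Complex.re_add_im]

theorem liftBaseChange_eq_re_add_I_smul_im {V : Type*} [AddCommGroup V] [Module ℝ V]
    (g : V →ₗ[ℝ] W) (x : ℂ ⊗[ℝ] V) :
    g.liftBaseChange ℂ x = g (complexificationRe x) + Complex.I • g (complexificationIm x) := by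
  conv_lhs => rw [← one_tmul_re_add_I_tmul_im x]
  simp only [map_add, LinearMap.liftBaseChange_tmul, one_smul]

/-- The largest complex subspace `V_ℂ = {v ∈ V_ℝ | i • v ∈ V_ℝ}` contained in a real subspace
`V_ℝ` of a complex vector space. -/
def maxComplexSubmodule (Vr : Submodule ℝ W) : Submodule ℂ W where
  carrier := {v | v ∈ Vr ∧ Complex.I • v ∈ Vr}
  zero_mem' := by simp
  add_mem' hv hw := ⟨add_mem hv.1 hw.1, by simpa only [smul_add] using add_mem hv.2 hw.2⟩
  smul_mem' z v hv := by
    have smul_mem (z : ℂ) : z • v ∈ Vr := by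
      rw [complex_smul_eq_re_smul_add_im_smul_I_smul]
      exact add_mem (Vr.smul_mem _ hv.1) (Vr.smul_mem _ hv.2)
    exact ⟨smul_mem z, smul_smul Complex.I z v ▸ smul_mem (Complex.I * z)⟩

namespace maxComplexSubmodule

variable (Vr : Submodule ℝ W)

/-- The inclusion of `V_ℂ` into `V_ℝ`, as an `ℝ`-linear map. -/
noncomputable def inclusion : maxComplexSubmodule Vr →ₗ[ℝ] Vr :=
  ((maxComplexSubmodule Vr).subtype.restrictScalars ℝ).codRestrict Vr fun v => v.2.1

/-- The map `φ v = i ⊗ v - 1 ⊗ (i • v)` from `V_ℂ` to the complexification of `V_ℝ`. It is bundled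
as an `ℝ`-linear map; `toComplexification_smul` says that it is conjugate-linear. -/
noncomputable def toComplexification : maxComplexSubmodule Vr →ₗ[ℝ] ℂ ⊗[ℝ] Vr :=
  TensorProduct.mk ℝ ℂ Vr Complex.I ∘ₗ inclusion Vr -
    TensorProduct.mk ℝ ℂ Vr 1 ∘ₗ inclusion Vr ∘ₗ Module.toModuleEnd ℝ _ Complex.I

variable {Vr}

theorem coe_inclusion (v : maxComplexSubmodule Vr) : (inclusion Vr v : W) = v :=
  rfl

theorem inclusion_injective : Function.Injective (inclusion Vr) := fun _ _ h =>
  Subtype.ext (congrArg ((↑) : Vr → W) h)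

theorem toComplexification_apply (v : maxComplexSubmodule Vr) :
    toComplexification Vr v =
      Complex.I ⊗ₜ[ℝ] inclusion Vr v - (1 : ℂ) ⊗ₜ[ℝ] inclusion Vr (Complex.I • v) :=
  rfl

theorem toComplexification_I_smul (v : maxComplexSubmodule Vr) :
    toComplexification Vr (Complex.I • v) = -Complex.I • toComplexification Vr v := by
  have I_smul_I_smul : Complex.I • Complex.I • v = -v := by
    rw [smul_smul, Complex.I_mul_I, neg_one_smul]
  calc
    toComplexification Vr (Complex.I • v)
      = Complex.I ⊗ₜ[ℝ] inclusion Vr (Complex.I • v) + (1 : ℂ) ⊗ₜ[ℝ] inclusion Vr v := by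
        rw [toComplexification_apply, I_smul_I_smul, map_neg, tmul_neg, sub_neg_eq_add]
    _ = -Complex.I • toComplexification Vr v := by
        rw [toComplexification_apply, smul_sub, smul_tmul', smul_tmul', smul_eq_mul, smul_eq_mul,
          neg_mul, Complex.I_mul_I, neg_neg, mul_one, neg_tmul, sub_neg_eq_add, add_comm]

open scoped ComplexConjugate in
theorem toComplexification_smul (z : ℂ) (v : maxComplexSubmodule Vr) :
    toComplexification Vr (z • v) = conj z • toComplexification Vr v := by
  rw [complex_smul_eq_re_smul_add_im_smul_I_smul z, map_add, map_smul, map_smul,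
    toComplexification_I_smul, complex_smul_eq_re_smul_add_im_smul_I_smul (conj z),
    Complex.conj_re, Complex.conj_im, neg_smul, neg_smul, smul_neg]

theorem complexificationIm_toComplexification (v : maxComplexSubmodule Vr) :
    complexificationIm (toComplexification Vr v) = inclusion Vr v := by
  simp [toComplexification_apply]

theorem toComplexification_injective : Function.Injective (toComplexification Vr) := by
  refine Function.Injective.of_comp (f := complexificationIm) ?_
  simpa only [Function.comp_def, complexificationIm_toComplexification] using
    inclusion_injective (Vr := Vr)

theorem liftBaseChange_toComplexification (v : maxComplexSubmodule Vr) :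
    Vr.subtype.liftBaseChange ℂ (toComplexification Vr v) = 0 := by
  rw [toComplexification_apply, map_sub, LinearMap.liftBaseChange_tmul,
    LinearMap.liftBaseChange_tmul, Submodule.subtype_apply, Submodule.subtype_apply,
    coe_inclusion, coe_inclusion, Submodule.coe_smul, one_smul, sub_self]

theorem range_toComplexification :
    LinearMap.range (toComplexification Vr) =
      (LinearMap.ker (Vr.subtype.liftBaseChange ℂ)).restrictScalars ℝ := by
  apply le_antisymm
  · rintro _ ⟨v, rfl⟩
    exact liftBaseChange_toComplexification v
  · intro x hx
    let a : Vr := complexificationRe x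
    let b : Vr := complexificationIm x
    have x_eq : (1 : ℂ) ⊗ₜ[ℝ] a + Complex.I ⊗ₜ[ℝ] b = x :=
      one_tmul_re_add_I_tmul_im x
    have a_add_I_smul_b : (a : W) + Complex.I • (b : W) = 0 := by
      rwa [Submodule.restrictScalars_mem, LinearMap.mem_ker,
        liftBaseChange_eq_re_add_I_smul_im] at hx
    have I_smul_b : Complex.I • (b : W) = ↑(-a) := eq_neg_of_add_eq_zero_right a_add_I_smul_b
    let v : maxComplexSubmodule Vr := ⟨b, b.2, I_smul_b ▸ (-a).2⟩
    have inclusion_I_smul_v : inclusion Vr (Complex.I • v) = -a := Subtype.ext I_smul_b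
    refine ⟨v, ?_⟩
    calc
      toComplexification Vr v = Complex.I ⊗ₜ[ℝ] b - (1 : ℂ) ⊗ₜ[ℝ] (-a) := by
        rw [toComplexification_apply, inclusion_I_smul_v]
        rfl
      _ = (1 : ℂ) ⊗ₜ[ℝ] a + Complex.I ⊗ₜ[ℝ] b := by rw [tmul_neg, sub_neg_eq_add, add_comm]
      _ = x := x_eq

end maxComplexSubmodule

end ComplexSpace

/-- With `W`, `V_ℝ`, `f := liftBaseChange ℂ Vr.subtype` and
`V_ℂ := {v ∈ V_ℝ | i • v ∈ V_ℝ}` as in the paper, the map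
`φ : V_ℂ → ℂ ⊗[ℝ] V_ℝ`, `φ(v) = i ⊗ v − 1 ⊗ (i • v)`, is ℝ-linear, injective,
has range exactly `ker f`, and is conjugate-linear: `φ(i • v) = −i • φ(v)`.
In particular `ker f` is isomorphic to the complex conjugate space of `V_ℂ`. -/
theorem stmt_1 (W : Type*) [AddCommGroup W] [Module ℝ W] [Module ℂ W]
    [IsScalarTower ℝ ℂ W] (Vr : Submodule ℝ W)
    (φ : {v : W // v ∈ Vr ∧ Complex.I • v ∈ Vr} → ℂ ⊗[ℝ] ↥Vr)
    (hφ : φ = fun v => Complex.I ⊗ₜ[ℝ] (⟨v.1, v.2.1⟩ : ↥Vr)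
        - (1 : ℂ) ⊗ₜ[ℝ] (⟨Complex.I • v.1, v.2.2⟩ : ↥Vr)) :
    (∀ (v w : {v : W // v ∈ Vr ∧ Complex.I • v ∈ Vr})
        (h : v.1 + w.1 ∈ Vr ∧ Complex.I • (v.1 + w.1) ∈ Vr),
        φ ⟨v.1 + w.1, h⟩ = φ v + φ w) ∧
    (∀ (r : ℝ) (v : {v : W // v ∈ Vr ∧ Complex.I • v ∈ Vr})
        (h : r • v.1 ∈ Vr ∧ Complex.I • (r • v.1) ∈ Vr),
        φ ⟨r • v.1, h⟩ = r • φ v) ∧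
    Function.Injective φ ∧
    Set.range φ = ↑(LinearMap.ker (LinearMap.liftBaseChange ℂ Vr.subtype)) ∧
    (∀ (v : {v : W // v ∈ Vr ∧ Complex.I • v ∈ Vr})
        (h : Complex.I • v.1 ∈ Vr ∧ Complex.I • (Complex.I • v.1) ∈ Vr),
        φ ⟨Complex.I • v.1, h⟩ = (-Complex.I) • φ v) := by
  have φ_eq : φ = maxComplexSubmodule.toComplexification Vr := hφ
  rw [φ_eq]
  refine ⟨fun v w _ => ?_, fun r v _ => ?_, ?_, ?_, fun v _ => ?_⟩
  · exact (maxComplexSubmodule.toComplexification Vr).map_add v w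
  · exact (maxComplexSubmodule.toComplexification Vr).map_smul r v
  · exact maxComplexSubmodule.toComplexification_injective
  · exact congrArg SetLike.coe maxComplexSubmodule.range_toComplexification
  · exact Complex.conj_I ▸ maxComplexSubmodule.toComplexification_smul Complex.I v
end

section
/- Let V be a complex vector space, V_ℝ ⊆ V a real subspace, and V_ℂ ⊆ V a complex subspace with V_ℂ ⊆ V_ℝ. Suppose the canonical ℂ-linear map ℂ ⊗[ℝ] (V_ℝ / V_ℂ) → V / V_ℂ (induced by z ⊗ [v] ↦ [z • v]) is bijective. Then V_ℂ = {v ∈ V_ℝ | i • v ∈ V_ℝ} and V = span_ℂ(V_ℝ). In particular, the pair (V, V_ℝ) determines V_ℂ. -/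
open TensorProduct

/-!
If `v` and `i • v` both lie in `V_ℝ`, then `i ⊗ [v]` and `1 ⊗ [i • v]` have the same image
`[i • v]` in `V / V_ℂ`. By injectivity they are equal, and taking imaginary parts in the first
tensor factor gives `[v] = 0`. On the other hand, the image of the canonical map is the image
of `span_ℂ V_ℝ` in `V / V_ℂ`, so surjectivity says that `span_ℂ V_ℝ + V_ℂ = V`.

The imaginary part enters only as an `ℝ`-linear form `φ` on `ℂ` with `φ 1 = 0` and `φ i = 1`.
-/

theorem smul_eq_smul_of_tmul_eq_tmul {R A M : Type*} [CommSemiring R] [AddCommMonoid A]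
    [Module R A] [AddCommMonoid M] [Module R M] (φ : A →ₗ[R] R) {a b : A} {x y : M}
    (h : a ⊗ₜ[R] x = b ⊗ₜ[R] y) : φ a • x = φ b • y := by
  simpa only [LinearMap.rTensor_tmul, TensorProduct.lid_tmul] using
    congrArg (fun t => TensorProduct.lid R M (φ.rTensor M t)) h

section ComparisonMap

variable {R S V : Type*} [CommRing R] [CommRing S] [Algebra R S] [AddCommGroup V] [Module R V]
  [Module S V] [IsScalarTower R S V]

/-- The `R`-linear map `W / (U ∩ W) → V / U` induced by the inclusion of an `R`-submodule `W` in
`V`, for an `S`-submodule `U`. The intersection is encoded as the preimage of `U` in `W`. -/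
def quotientInclusion (W : Submodule R V) (U : Submodule S V) :
    (W ⧸ (U.restrictScalars R).comap W.subtype) →ₗ[R] V ⧸ U :=
  Submodule.liftQ _ ((U.mkQ.restrictScalars R).comp W.subtype)
    fun _ hx => LinearMap.mem_ker.mpr ((Submodule.Quotient.mk_eq_zero _).mpr hx)

/-- The canonical `S`-linear map `S ⊗[R] (W / (U ∩ W)) → V / U`, `s ⊗ [w] ↦ [s • w]`, whose
bijectivity defines a mixed vector space in the case `R = ℝ`, `S = ℂ`, `U ⊆ W`. -/
def comparisonMap (W : Submodule R V) (U : Submodule S V) :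
    S ⊗[R] (W ⧸ (U.restrictScalars R).comap W.subtype) →ₗ[S] V ⧸ U :=
  (quotientInclusion W U).liftBaseChange S

variable {W : Submodule R V} {U : Submodule S V}

theorem comparisonMap_tmul_mk (s : S) (w : W) :
    comparisonMap W U (s ⊗ₜ Submodule.Quotient.mk w) = Submodule.Quotient.mk (s • (w : V)) :=
  rfl

theorem range_comparisonMap :
    LinearMap.range (comparisonMap W U) = (Submodule.span S (W : Set V)).map U.mkQ := by
  have range_quotientInclusion : Set.range (quotientInclusion W U) = U.mkQ '' (W : Set V) := by
    rw [← LinearMap.coe_range, quotientInclusion, Submodule.range_liftQ, LinearMap.range_comp,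
      Submodule.range_subtype, Submodule.map_coe, LinearMap.coe_restrictScalars]
  rw [comparisonMap, LinearMap.range_liftBaseChange, LinearMap.coe_range,
    range_quotientInclusion, Submodule.map_span]

theorem comparisonMap_surjective_iff :
    Function.Surjective (comparisonMap W U) ↔ U ⊔ Submodule.span S (W : Set V) = ⊤ := by
  rw [← LinearMap.range_eq_top, range_comparisonMap, Submodule.map_mkQ_eq_top]

theorem mem_of_smul_mem_of_comparisonMap_injective
    (hinj : Function.Injective (comparisonMap W U)) (φ : S →ₗ[R] R) (hφ_one : φ 1 = 0) {s : S}
    (hφ_s : φ s = 1) {v : V} (hv : v ∈ W) (hsv : s • v ∈ W) : v ∈ U := by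
  let U' := (U.restrictScalars R).comap W.subtype
  have tmul_eq : s ⊗ₜ[R] U'.mkQ ⟨v, hv⟩ = 1 ⊗ₜ[R] U'.mkQ ⟨s • v, hsv⟩ := by
    apply hinj
    simp only [U', Submodule.mkQ_apply, comparisonMap_tmul_mk, one_smul]
  have mkQ_eq_zero : U'.mkQ ⟨v, hv⟩ = 0 := by
    simpa only [hφ_s, hφ_one, one_smul, zero_smul] using smul_eq_smul_of_tmul_eq_tmul φ tmul_eq
  exact (Submodule.Quotient.mk_eq_zero U').mp mkQ_eq_zero

theorem stmt_3_general (φ : S →ₗ[R] R) (hφ_one : φ 1 = 0) {s : S} (hφ_s : φ s = 1)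
    (hUW : U.restrictScalars R ≤ W) (hbij : Function.Bijective (comparisonMap W U)) :
    (U : Set V) = {v : V | v ∈ W ∧ s • v ∈ W} ∧ Submodule.span S (W : Set V) = ⊤ := by
  constructor
  · ext v
    exact ⟨fun hv => ⟨hUW hv, hUW (U.smul_mem s hv)⟩, fun ⟨hv, hsv⟩ =>
      mem_of_smul_mem_of_comparisonMap_injective hbij.injective φ hφ_one hφ_s hv hsv⟩
  · have le_span : U ≤ Submodule.span S (W : Set V) := fun _ hv => Submodule.subset_span (hUW hv)
    rw [← sup_eq_right.mpr le_span]
    exact comparisonMap_surjective_iff.mp hbij.surjective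

end ComparisonMap

/-- Let `V` be a complex vector space, `V_ℝ ⊆ V` a real subspace and `V_ℂ ⊆ V` a complex
subspace with `V_ℂ ⊆ V_ℝ`.  If the canonical ℂ-linear map
`ℂ ⊗[ℝ] (V_ℝ / V_ℂ) → V / V_ℂ` (`z ⊗ [v] ↦ [z • v]`) is bijective, then
`V_ℂ = {v ∈ V_ℝ | i • v ∈ V_ℝ}` and `V = span_ℂ(V_ℝ)`; in particular the pair
`(V, V_ℝ)` determines `V_ℂ`. -/
theorem stmt_3 (V : Type*) [AddCommGroup V] [Module ℝ V] [Module ℂ V]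
    [IsScalarTower ℝ ℂ V] (Vr : Submodule ℝ V) (Vc : Submodule ℂ V)
    (hsub : (Vc : Set V) ⊆ (Vr : Set V))
    (hbij : Function.Bijective
      (LinearMap.liftBaseChange ℂ
        (Submodule.liftQ ((Vc.restrictScalars ℝ).comap Vr.subtype)
          ((Vc.mkQ.restrictScalars ℝ).comp Vr.subtype)
          (fun x hx =>
            LinearMap.mem_ker.mpr ((Submodule.Quotient.mk_eq_zero _).mpr hx))))) :
    (Vc : Set V) = {v : V | v ∈ Vr ∧ Complex.I • v ∈ Vr} ∧
    Submodule.span ℂ (Vr : Set V) = ⊤ :=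
  stmt_3_general Complex.imLm Complex.one_im Complex.I_im hsub hbij
end

section
/- Let ι be a type and ε : ι → ℤ/2ℤ a parity function, and let T : ι → ι → ι → ℂ. Suppose that for all i, j, k ∈ ι: (1) T i j k = (−1)^{ε(i)·ε(j)} · T j i k, and (2) T i j k = −(−1)^{ε(j)·ε(k)} · T i k j, where (−1)^{a} for a ∈ ℤ/2ℤ denotes 1 if a = 0 and −1 if a = 1. Then T i j k = 0 for all i, j, k. (This is the coordinate form of the statement that the first prolongation 𝔬𝔰𝔭(V,J)^{(1)} of the orthosymplectic Lie superalgebra vanishes: writing T^i_{jk} = J(T(v_i)v_j, v_k) in a homogeneous basis {v_i} of parities ε(i), the supersymmetry of T gives condition (1) and membership of each T(v_i) in 𝔬𝔰𝔭(V,J) gives condition (2); the same sign conditions arise for the periplectic algebra 𝔭(V,J), so the lemma also yields 𝔭(V,J)^{(1)} = 0.) -/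
/-!
Swapping the first two indices and then the last two rotates `T i j k` cyclically to `T j k i`, at
the cost of a minus sign and of the commutation factors of `i` past `j` and `k`. Three rotations
restore the index order; the commutation factors cancel in pairs, while the three minus signs
leave `T i j k = -T i j k`.
-/

section CommutationFactor

variable {ι R M : Type*} {σ : ι → ι → R} {T : ι → ι → ι → M}

theorem eq_neg_smul_rotate [Monoid R] [AddGroup M] [DistribMulAction R M]
    (hsymm : ∀ i j k, T i j k = σ i j • T j i k)
    (hskew : ∀ i j k, T i j k = -(σ j k • T i k j)) (i j k : ι) :
    T i j k = -((σ i j * σ i k) • T j k i) := by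
  rw [hsymm i j k, hskew j i k, smul_neg, smul_smul]

theorem eq_neg_self_of_symm_of_skew [CommMonoid R] [AddGroup M] [DistribMulAction R M]
    (hσ : ∀ i j, σ i j * σ j i = 1)
    (hsymm : ∀ i j k, T i j k = σ i j • T j i k)
    (hskew : ∀ i j k, T i j k = -(σ j k • T i k j)) (i j k : ι) :
    T i j k = -T i j k := by
  have rotate := eq_neg_smul_rotate hsymm hskew
  have factors_cancel : σ i j * σ i k * (σ j k * σ j i) * (σ k i * σ k j) = 1 :=
    calc
      _ = (σ i j * σ j i) * (σ i k * σ k i) * (σ j k * σ k j) := by ac_rfl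
      _ = 1 := by simp only [hσ, mul_one]
  calc
    T i j k = -((σ i j * σ i k) • T j k i) := rotate i j k
    _ = (σ i j * σ i k * (σ j k * σ j i)) • T k i j := by
      rw [rotate j k i, smul_neg, neg_neg, smul_smul]
    _ = -((σ i j * σ i k * (σ j k * σ j i) * (σ k i * σ k j)) • T i j k) := by
      rw [rotate k i j, smul_neg, smul_smul]
    _ = -T i j k := by rw [factors_cancel, one_smul]

theorem stmt_4_general [CommMonoid R] [AddCommGroup M] [DistribMulAction R M]
    (hM : IsSMulRegular M (2 : ℕ)) (hσ : ∀ i j, σ i j * σ j i = 1)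
    (hsymm : ∀ i j k, T i j k = σ i j • T j i k)
    (hskew : ∀ i j k, T i j k = -(σ j k • T i k j)) (i j k : ι) :
    T i j k = 0 := by
  refine hM.right_eq_zero_of_smul ?_
  rw [two_nsmul, add_eq_zero_iff_eq_neg]
  exact eq_neg_self_of_symm_of_skew hσ hsymm hskew i j k

end CommutationFactor

/-- The sign `(-1) ^ (a * b)` arising when homogeneous elements of parities `a` and `b` are
interchanged, with values in an arbitrary ring. -/
def koszulSign (R : Type*) [Ring R] (a b : ZMod 2) : R :=
  if a * b = 0 then 1 else -1

theorem koszulSign_mul_swap (R : Type*) [Ring R] (a b : ZMod 2) :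
    koszulSign R a b * koszulSign R b a = 1 := by
  rw [koszulSign, koszulSign, mul_comm b a]
  split_ifs <;> simp only [mul_one, mul_neg, neg_neg]

/-- Coordinate form of `𝔬𝔰𝔭(V,J)^{(1)} = 0` (and `𝔭(V,J)^{(1)} = 0`):
if `T i j k` is supersymmetric in the first two indices, `T i j k = (−1)^{ε i ε j} T j i k`,
and super-antisymmetric in the last two, `T i j k = −(−1)^{ε j ε k} T i k j`,
then `T` vanishes. -/
theorem stmt_4 {ι : Type*} (ε : ι → ZMod 2) (T : ι → ι → ι → ℂ)
    (h1 : ∀ i j k, T i j k = (if ε i * ε j = 0 then (1 : ℂ) else -1) * T j i k)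
    (h2 : ∀ i j k, T i j k = -((if ε j * ε k = 0 then (1 : ℂ) else -1) * T i k j)) :
    ∀ i j k, T i j k = 0 :=
  stmt_4_general (σ := fun i j ↦ koszulSign ℂ (ε i) (ε j)) (nsmul_right_injective two_ne_zero)
    (fun i j ↦ koszulSign_mul_swap ℂ (ε i) (ε j)) h1 h2
end

section
/- Let n ≥ 3, let Q be a quadratic form on a real vector space V₀, and let e : Fin n → V₀ satisfy: the polar form of Q vanishes on distinct basis vectors (polar Q (e i) (e j) = 0 for i ≠ j) and Q(e i) ≠ 0 for all i. Let M be a module over the Clifford algebra CliffordAlgebra Q, and let s : Fin n → M satisfy ι(e i) • (s j) = ι(e j) • (s i) for all i, j, where ι : V₀ → CliffordAlgebra Q is the canonical embedding. Then s j = 0 for all j. (This is the computation showing that the geometric structure with group Spin(V₀) ⋉ W, where W = {f_s : V₀ → V₁, f_s(v) = v · s | s ∈ V₁} inside Hom(V₀, V₁) for a Clifford module V₁, is of finite type provided dim ≥ 3.) -/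
/-! The expression `T i j k = ι (e i) • ι (e j) • s k` is antisymmetric in `i, j`, because
orthogonal vectors anticommute in the Clifford algebra, and symmetric in `j, k` by the equation on
`s`. As in the uniqueness proof for the Levi-Civita connection, alternating the two symmetries
gives `T = -T` on distinct indices. Each `ι (e i)` acts injectively since its square is the
scalar `Q (e i)`, so `s k = 0` as soon as two further indices `i, j` are available. -/

theorem eq_neg_self_of_antisymm_left_of_symm_right {I G : Type*} [InvolutiveNeg G]
    {T : I → I → I → G} (hanti : ∀ i j k, i ≠ j → T i j k = -T j i k)
    (hsymm : ∀ i j k, T i j k = T i k j) {i j k : I} (hij : i ≠ j) (hik : i ≠ k) (hjk : j ≠ k) :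
    T i j k = -T i j k :=
  calc T i j k = -T j i k := hanti i j k hij
    _ = -T j k i := by rw [hsymm]
    _ = T k j i := (hanti k j i hjk.symm).symm
    _ = T k i j := hsymm k j i
    _ = -T i k j := hanti k i j hik.symm
    _ = -T i j k := by rw [hsymm]

theorem eq_zero_of_pairwise_anticommute_of_smul_symm {I A M : Type*} [Ring A] [AddCommGroup M]
    [Module A M] {x : I → A} {s : I → M} (h2 : IsSMulRegular M (2 : A))
    (hanti : Pairwise fun i j => x i * x j = -(x j * x i)) (hs : ∀ i j, x i • s j = x j • s i)
    {i j k : I} (hij : i ≠ j) (hik : i ≠ k) (hjk : j ≠ k)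
    (hi : IsSMulRegular M (x i)) (hj : IsSMulRegular M (x j)) : s k = 0 := by
  have eq_neg : x i • x j • s k = -(x i • x j • s k) :=
    eq_neg_self_of_antisymm_left_of_symm_right (T := fun i j k => x i • x j • s k)
      (fun i j k hij => by rw [smul_smul, hanti hij, neg_smul, mul_smul])
      (fun i j k => by rw [hs j k]) hij hik hjk
  have eq_zero : x i • x j • s k = 0 :=
    h2.right_eq_zero_of_smul <| by rw [two_smul, ← eq_neg_iff_add_eq_zero, ← eq_neg]
  exact hj.right_eq_zero_of_smul (hi.right_eq_zero_of_smul eq_zero)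

section CliffordModule

variable {R V M : Type*} [CommRing R] [AddCommGroup V] [Module R V] {Q : QuadraticForm R V}

theorem isSMulRegular_ι_of_isSMulRegular_algebraMap [SMul (CliffordAlgebra Q) M]
    [IsScalarTower (CliffordAlgebra Q) (CliffordAlgebra Q) M] {v : V}
    (hv : IsSMulRegular M (algebraMap R (CliffordAlgebra Q) (Q v))) :
    IsSMulRegular M (CliffordAlgebra.ι Q v) :=
  .of_mul (CliffordAlgebra.ι_sq_scalar Q v ▸ hv)

theorem stmt_6_general {I : Type*} [AddCommGroup M] [Module (CliffordAlgebra Q) M]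
    (hI : 3 ≤ ENat.card I) (h2 : IsSMulRegular M (2 : CliffordAlgebra Q)) {e : I → V}
    (horth : Pairwise fun i j => Q.IsOrtho (e i) (e j))
    (hQ : ∀ i, IsSMulRegular M (algebraMap R (CliffordAlgebra Q) (Q (e i)))) {s : I → M}
    (hs : ∀ i j, CliffordAlgebra.ι Q (e i) • s j = CliffordAlgebra.ι Q (e j) • s i) (k : I) :
    s k = 0 := by
  obtain ⟨i, hik, -⟩ := ENat.exists_ne_ne_of_three_le hI k k
  obtain ⟨j, hji, hjk⟩ := ENat.exists_ne_ne_of_three_le hI i k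
  exact eq_zero_of_pairwise_anticommute_of_smul_symm h2
    (fun _ _ hij => CliffordAlgebra.ι_mul_ι_comm_of_isOrtho (horth hij)) hs hji.symm hik hjk
    (isSMulRegular_ι_of_isSMulRegular_algebraMap (hQ i))
    (isSMulRegular_ι_of_isSMulRegular_algebraMap (hQ j))

end CliffordModule

/-- Finite-type computation for the superization of a Riemannian spin manifold:
if `n ≥ 3`, `e 0, …, e (n-1)` is an orthogonal family with `Q (e i) ≠ 0`, `M` is a
module over the Clifford algebra of `Q`, and spinors `s i` satisfy
`ι(e i) • s j = ι(e j) • s i` for all `i, j`, then all `s j` vanish. -/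
theorem stmt_6 (n : ℕ) (hn : 3 ≤ n) (V₀ : Type*) [AddCommGroup V₀] [Module ℝ V₀]
    (Q : QuadraticForm ℝ V₀) (e : Fin n → V₀)
    (horth : ∀ i j, i ≠ j → QuadraticMap.polar (⇑Q) (e i) (e j) = 0)
    (hQ : ∀ i, Q (e i) ≠ 0)
    (M : Type*) [AddCommGroup M] [Module (CliffordAlgebra Q) M]
    (s : Fin n → M)
    (hs : ∀ i j, CliffordAlgebra.ι Q (e i) • s j = CliffordAlgebra.ι Q (e j) • s i) :
    ∀ j, s j = 0 := by
  have scalar_regular {r : ℝ} (hr : r ≠ 0) : IsSMulRegular M (algebraMap ℝ (CliffordAlgebra Q) r) :=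
    (hr.isUnit.map (algebraMap ℝ (CliffordAlgebra Q))).isSMulRegular M
  have two_regular : IsSMulRegular M (2 : CliffordAlgebra Q) := by
    simpa only [map_ofNat] using scalar_regular two_ne_zero
  exact stmt_6_general (by simpa using hn) two_regular
    (fun i j hij => QuadraticMap.isOrtho_polarBilin.mp (horth i j hij))
    (fun i => scalar_regular (hQ i)) hs
end

section
/- Let n ≥ 3, let Q be a quadratic form on a real vector space V₀, and let e : Fin n → V₀ satisfy: the polar form of Q vanishes on distinct basis vectors (polar Q (e i) (e j) = 0 for i ≠ j) and Q(e i) ≠ 0 for all i. Let M be a module over CliffordAlgebra Q, and let s : Fin n → M satisfy ι(e i) • (s j) = ι(e j) • (s i) for all i, j, where ι : V₀ → CliffordAlgebra Q is the canonical embedding. Then for all j ≠ k one has (ι(e j) * ι(e k)) • (s j) = 0. -/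
/-!
For distinct indices `i, j, k` the element `x i • x j • s k` is symmetric in `j, k`, because
`x j • s k = x k • s j`, and antisymmetric in `i, j`, because `x i` and `x j` anticommute. The two
symmetries force it to equal its own negative. If `2`, `x i` and `x j` act injectively, this gives
`s k = 0`. In the Clifford algebra one takes `x i = ι (e i)`, which is a unit since its square is
the unit `Q (e i)`.
-/

open Cardinal

section Anticommuting

variable {A M : Type*} [Ring A] [AddCommGroup M] [Module A M]

theorem two_smul_smul_smul_eq_zero_of_anticommuting {a b c : A} {u v w : M}
    (hab : a * b = -(b * a)) (hac : a * c = -(c * a)) (hbc : b * c = -(c * b))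
    (huv : a • v = b • u) (huw : a • w = c • u) (hvw : b • w = c • v) :
    (2 : A) • a • b • w = 0 := by
  have eq_neg : a • b • w = -(a • b • w) :=
    calc
      a • b • w = a • c • v := by rw [hvw]
      _ = -(c • a • v) := by rw [smul_smul, hac, neg_smul, mul_smul]
      _ = -(c • b • u) := by rw [huv]
      _ = b • c • u := by rw [smul_smul b, hbc, neg_smul, mul_smul]
      _ = b • a • w := by rw [huw]
      _ = -(a • b • w) := by rw [smul_smul a, hab, neg_smul, neg_neg, mul_smul]
  rw [two_smul, ← eq_neg_iff_add_eq_zero]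
  exact eq_neg

theorem eq_zero_of_pairwise_anticommuting {I : Type*} (hI : 3 ≤ #I) {x : I → A} {s : I → M}
    (h2 : IsSMulRegular M (2 : A)) (hreg : ∀ i, IsSMulRegular M (x i))
    (hanti : Pairwise fun i j ↦ x i * x j = -(x j * x i))
    (hs : ∀ i j, x i • s j = x j • s i) :
    s = 0 := by
  funext k
  obtain ⟨j, hjk, -⟩ := Cardinal.exists_ne_ne_of_three_le hI k k
  obtain ⟨i, hij, hik⟩ := Cardinal.exists_ne_ne_of_three_le hI j k
  have two_smul_eq_zero : (2 : A) • x i • x j • s k = 0 :=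
    two_smul_smul_smul_eq_zero_of_anticommuting (hanti hij) (hanti hik) (hanti hjk)
      (hs i j) (hs i k) (hs j k)
  exact (hreg j).right_eq_zero_of_smul <| (hreg i).right_eq_zero_of_smul <|
    h2.right_eq_zero_of_smul two_smul_eq_zero

end Anticommuting

theorem stmt_8_general {R V M I : Type*} [CommRing R] [AddCommGroup V] [Module R V]
    {Q : QuadraticForm R V} [AddCommGroup M] [Module (CliffordAlgebra Q) M]
    (hI : 3 ≤ #I) (h2 : IsUnit (2 : R)) {e : I → V} {s : I → M}
    (horth : Pairwise fun i j ↦ Q.IsOrtho (e i) (e j)) (hQ : ∀ i, IsUnit (Q (e i)))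
    (hs : ∀ i j, CliffordAlgebra.ι Q (e i) • s j = CliffordAlgebra.ι Q (e j) • s i) :
    s = 0 := by
  have isUnit_two : IsUnit (2 : CliffordAlgebra Q) := by
    simpa only [map_ofNat] using h2.map (algebraMap R (CliffordAlgebra Q))
  have isUnit_ι (i : I) : IsUnit (CliffordAlgebra.ι Q (e i)) :=
    CliffordAlgebra.isUnit_ι_of_isUnit Q (hQ i)
  exact eq_zero_of_pairwise_anticommuting hI (isUnit_two.isSMulRegular M)
    (fun i ↦ (isUnit_ι i).isSMulRegular M)
    (fun _ _ hij ↦ CliffordAlgebra.ι_mul_ι_comm_of_isOrtho (horth hij)) hs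

/-- Key intermediate identity in the finite-type computation for the superization of a
Riemannian spin manifold: if `n ≥ 3`, the `e i` form an orthogonal family with
`Q (e i) ≠ 0`, and spinors `s i` satisfy `ι(e i) • s j = ι(e j) • s i` for all `i, j`,
then `(ι(e j) * ι(e k)) • s j = 0` for all `j ≠ k`. -/
theorem stmt_8 (n : ℕ) (hn : 3 ≤ n) (V₀ : Type*) [AddCommGroup V₀] [Module ℝ V₀]
    (Q : QuadraticForm ℝ V₀) (e : Fin n → V₀)
    (horth : ∀ i j, i ≠ j → QuadraticMap.polar (⇑Q) (e i) (e j) = 0)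
    (hQ : ∀ i, Q (e i) ≠ 0)
    (M : Type*) [AddCommGroup M] [Module (CliffordAlgebra Q) M]
    (s : Fin n → M)
    (hs : ∀ i j, CliffordAlgebra.ι Q (e i) • s j = CliffordAlgebra.ι Q (e j) • s i) :
    ∀ j k, j ≠ k → (CliffordAlgebra.ι Q (e j) * CliffordAlgebra.ι Q (e k)) • s j = 0 := by
  have s_eq_zero : s = 0 := stmt_8_general (by simpa using hn) (isUnit_iff_ne_zero.mpr two_ne_zero)
    (fun i j hij ↦ QuadraticMap.isOrtho_polarBilin.mp (horth i j hij)) (fun i ↦ (hQ i).isUnit) hs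
  simp [s_eq_zero]
end
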